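/- Let $\varphi(z) = \frac{z+s}{1+sz}$ with $s \in (0,1)$ and let $\psi$ be holomorphic on $\mathbb{D}$, continuous on $\overline{\mathbb{D}}$, and bounded away from zero. Then the spectral radius of $C_{\psi,\varphi}$ on $H^2(\mathbb{D})$ satisfies $r(C_{\psi,\varphi}) \leq \max\left\{|\psi(1)|\left(\frac{1+s}{1-s}\right)^{1/2},\; |\psi(-1)|\left(\frac{1-s}{1+s}\right)^{1/2}\right\}$. -/

import Mathlib

open Metric

/-- The Hardy space `H²(𝔻)`, modelled as the space of square-summable Taylor coefficient
sequences. -/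
abbrev H2 : Type := lp (fun _ : ℕ => ℂ) 2

/-- The holomorphic function on the unit disc associated to an element of `H²(𝔻)`. -/
noncomputable def H2.toFun (f : H2) (z : ℂ) : ℂ := ∑' n : ℕ, f n * z ^ n

/-!
Write `φ z = (z + a) / (1 + conj a * z)` and `t z = conj a * z`. Along `φ` on the unit circle
`Re t` increases by `2 (Im t)² / |1 + t|²`, which vanishes only at the two fixed points `± a / |a|`.
Replace the `L²` norm of boundary values by the equivalent one with weight `exp (A Re t)`. After a
change of variables, whose Jacobian is the Poisson kernel `P` at `-a`, one application of
`C_{ψ,φ}` multiplies the squared norm by at most the supremum of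
`|ψ z|² P(z)⁻¹ exp (-A (Re t(φ z) - Re t(z)))`. The exponential equals `1` at the fixed points and
tends to `0` elsewhere as `A → ∞`, so by compactness a large `A` brings this supremum below any
number exceeding the values of `|ψ|² P⁻¹` at the two fixed points.
-/

open scoped ComplexConjugate

section Preliminaries

theorem spectralRadius_le_of_forall_norm_pow_le {𝕜 A : Type*} [NormedField 𝕜] [NormedRing A]
    [NormedAlgebra 𝕜 A] [CompleteSpace A] {a : A} {C q : ℝ} (hq : 0 ≤ q)
    (h : ∀ n : ℕ, ‖a ^ n‖ ≤ C * q ^ n) : spectralRadius 𝕜 a ≤ ENNReal.ofReal q := by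
  refine iSup₂_le fun k hk => ?_
  rw [← enorm_eq_nnnorm, ← ofReal_norm]
  refine ENNReal.ofReal_le_ofReal (le_of_not_gt fun hqk => ?_)
  have hk0 : 0 < ‖k‖ := hq.trans_lt hqk
  have one_le (n : ℕ) : 1 ≤ C * ‖(1 : A)‖ * (q / ‖k‖) ^ n := by
    rw [div_pow, ← mul_div_assoc, one_le_div (pow_pos hk0 n)]
    calc ‖k‖ ^ n = ‖k ^ n‖ := (norm_pow k n).symm
      _ ≤ ‖a ^ n‖ * ‖(1 : A)‖ := spectrum.norm_le_norm_mul_of_mem (spectrum.pow_mem_pow a n hk)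
      _ ≤ C * q ^ n * ‖(1 : A)‖ := by gcongr; exact h n
      _ = C * ‖(1 : A)‖ * q ^ n := by ring
  have tendsto_zero := (tendsto_pow_atTop_nhds_zero_of_lt_one (by positivity)
    ((div_lt_one hk0).2 hqk)).const_mul (C * ‖(1 : A)‖)
  rw [mul_zero] at tendsto_zero
  exact absurd (ge_of_tendsto' tendsto_zero one_le) (by norm_num)

variable {X : Type*} [TopologicalSpace X] {K : Set X}

theorem exists_forall_le_mul_exp_of_isCompact (hK : IsCompact K) {H d : X → ℝ}
    (hH : ContinuousOn H K) (hd : ContinuousOn d K) (hd_nonneg : ∀ x ∈ K, 0 ≤ d x) {c : ℝ}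
    (hc : 0 < c) (hlt : ∀ x ∈ K, d x = 0 → H x < c) :
    ∃ A : ℝ, ∀ x ∈ K, H x ≤ c * Real.exp (A * d x) := by
  suffices ∃ A : ℝ, ∀ x ∈ K, 0 ≤ d x → H x ≤ c * Real.exp (A * d x) from
    this.imp fun A hA x hx => hA x hx (hd_nonneg x hx)
  refine hK.induction_on (p := fun S => ∃ A : ℝ, ∀ x ∈ S, 0 ≤ d x → H x ≤ c * Real.exp (A * d x))
    ⟨0, by simp⟩ (fun S S' hS => Exists.imp fun A hA x hx => hA x (hS hx)) ?_ fun x hx => ?_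
  · rintro S S' ⟨A, hA⟩ ⟨A', hA'⟩
    refine ⟨max A A', ?_⟩
    rintro x (hx | hx) hdx
    · exact (hA x hx hdx).trans (by gcongr; exact le_max_left A A')
    · exact (hA' x hx hdx).trans (by gcongr; exact le_max_right A A')
  · obtain ⟨A, hA⟩ : ∃ A : ℝ, H x < c * Real.exp (A * d x) := by
      rcases (hd_nonneg x hx).eq_or_lt' with hdx | hdx
      · exact ⟨0, by simpa using hlt x hx hdx⟩
      · refine ⟨H x / c / d x, ?_⟩
        rw [div_mul_cancel₀ _ hdx.ne', ← div_lt_iff₀' hc]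
        exact (lt_add_one _).trans_le (Real.add_one_le_exp _)
    have near : ∀ᶠ y in nhdsWithin x K, H y < c * Real.exp (A * d y) :=
      (hH x hx).eventually_lt (continuousWithinAt_const.mul
        (continuousWithinAt_const.mul (hd x hx)).rexp) hA
    exact ⟨_, near, A, fun y hy _ => le_of_lt hy⟩

theorem exists_forall_le_and_one_le_mul_of_isCompact (hK : IsCompact K) {w : X → ℝ}
    (hw : ContinuousOn w K) (hw_pos : ∀ x ∈ K, 0 < w x) :
    ∃ C : ℝ, 0 ≤ C ∧ ∀ x ∈ K, w x ≤ C ∧ 1 ≤ C * w x := by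
  obtain ⟨C, hC⟩ := hK.exists_bound_of_continuousOn
    (hw.add (hw.inv₀ fun x hx => (hw_pos x hx).ne'))
  refine ⟨max C 0, le_max_right C 0, fun x hx => ?_⟩
  have inv_pos := inv_pos.2 (hw_pos x hx)
  have add_inv_le : w x + (w x)⁻¹ ≤ max C 0 :=
    (le_abs_self _).trans ((hC x hx).trans (le_max_left C 0))
  exact ⟨by linarith, (inv_le_iff_one_le_mul₀ (hw_pos x hx)).1 (by linarith [hw_pos x hx])⟩

end Preliminaries

section Parseval

theorem fourierCoeffOn_circleMap (F : ℂ → ℂ) (n : ℤ) :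
    fourierCoeffOn Real.two_pi_pos (fun θ => F (circleMap 0 1 θ)) n =
      Real.circleAverage (fun z => z ^ (-n) * F z) 0 1 := by
  have fourier_eq (θ : ℝ) :
      fourier (-n) (θ : AddCircle (2 * Real.pi - 0)) = circleMap 0 1 θ ^ (-n) := by
    rw [fourier_coe_apply, circleMap, zero_add, Complex.ofReal_one, one_mul, ← Complex.exp_int_mul]
    congr 1
    push_cast
    field
  rw [fourierCoeffOn_eq_integral, Real.circleAverage_def]
  simp only [fourier_eq, smul_eq_mul, sub_zero, one_div]

theorem hasSum_sq_norm_circleAverage_zpow_mul {F : ℂ → ℂ} (hF : ContinuousOn F (sphere 0 1)) :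
    HasSum (fun n : ℤ => ‖Real.circleAverage (fun z => z ^ (-n) * F z) 0 1‖ ^ 2)
      (Real.circleAverage (fun z => ‖F z‖ ^ 2) 0 1) := by
  have hcont : Continuous fun θ : ℝ => F (circleMap 0 1 θ) :=
    hF.comp_continuous (continuous_circleMap 0 1) (circleMap_mem_sphere 0 zero_le_one)
  obtain ⟨C, hC⟩ := (isCompact_sphere (0 : ℂ) 1).exists_bound_of_continuousOn hF
  have hL2 : MeasureTheory.MemLp (fun θ : ℝ => F (circleMap 0 1 θ)) 2
      (MeasureTheory.volume.restrict (Set.Ioc 0 (2 * Real.pi))) :=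
    .of_bound hcont.aestronglyMeasurable C
      (.of_forall fun θ => hC _ (circleMap_mem_sphere 0 zero_le_one θ))
  simpa only [fourierCoeffOn_circleMap, sub_zero, Real.circleAverage_def]
    using hasSum_sq_fourierCoeffOn Real.two_pi_pos hL2

end Parseval

namespace H2

theorem hasFPowerSeriesOnBall (f : H2) :
    HasFPowerSeriesOnBall f.toFun (.ofScalars ℂ fun n => f n) 0 1 := by
  have one_le_radius : 1 ≤ (FormalMultilinearSeries.ofScalars ℂ fun n => f n).radius :=
    FormalMultilinearSeries.le_radius_of_bound (r := 1) _ ‖f‖ fun n => by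
      simpa [FormalMultilinearSeries.ofScalars_norm] using
        lp.norm_apply_le_norm two_ne_zero f n
  have sum_eq := FormalMultilinearSeries.ofScalarsSum_eq_tsum (E := ℂ) fun n => f n
  exact ((FormalMultilinearSeries.hasFPowerSeriesOnBall _
    (one_pos.trans_le one_le_radius)).mono one_pos one_le_radius).congr
      fun z _ => (congrFun sum_eq z).trans (by simp [toFun])

/-- `F` extends the holomorphic function of `f ∈ H²(𝔻)` continuously to the closed disc. Boundary
values are used only for elements with such an extension; these are dense in `H²(𝔻)`. -/
structure HasContinuousExtension (f : H2) (F : ℂ → ℂ) : Prop where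
  continuousOn : ContinuousOn F (closedBall 0 1)
  eqOn : Set.EqOn f.toFun F (ball 0 1)

namespace HasContinuousExtension

variable {f : H2} {F : ℂ → ℂ}

theorem hasFPowerSeriesOnBall (h : f.HasContinuousExtension F) :
    HasFPowerSeriesOnBall F (.ofScalars ℂ fun n => f n) 0 1 :=
  f.hasFPowerSeriesOnBall.congr
    (by rw [← ENNReal.ofReal_one, Metric.eball_ofReal]; exact h.eqOn)

theorem diffContOnCl (h : f.HasContinuousExtension F) : DiffContOnCl ℂ F (ball 0 1) where
  differentiableOn := by
    rw [← Metric.eball_ofReal, ENNReal.ofReal_one]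
    exact h.hasFPowerSeriesOnBall.differentiableOn
  continuousOn := by rw [closure_ball 0 one_ne_zero]; exact h.continuousOn

theorem circleAverage_zpow_neg_natCast_mul (h : f.HasContinuousExtension F) (n : ℕ) :
    Real.circleAverage (fun z => z ^ (-(n : ℤ)) * F z) 0 1 = f n := by
  have series_eq := h.hasFPowerSeriesOnBall.hasFPowerSeriesAt.eq_formalMultilinearSeries
    (h.diffContOnCl.hasFPowerSeriesOnBall (R := 1) one_pos).hasFPowerSeriesAt
  have coeff_eq := congrArg (fun p => p n fun _ => (1 : ℂ)) series_eq
  simp only [FormalMultilinearSeries.ofScalars_apply_eq, cauchyPowerSeries_apply, one_pow,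
    smul_eq_mul, mul_one] at coeff_eq
  rw [coeff_eq, Real.circleAverage_eq_circleIntegral one_ne_zero]
  simp [mul_left_comm]

theorem circleAverage_zpow_succ_mul (h : f.HasContinuousExtension F) (n : ℕ) :
    Real.circleAverage (fun z => z ^ ((n : ℤ) + 1) * F z) 0 1 = 0 := by
  have hd : DiffContOnCl ℂ (fun z => z ^ (n + 1) * F z) (ball 0 |1|) := by
    rw [abs_one]
    exact (differentiable_pow (n + 1)).diffContOnCl.smul h.diffContOnCl
  exact_mod_cast hd.circleAverage.trans (by simp)

theorem norm_sq_eq_circleAverage (h : f.HasContinuousExtension F) :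
    ‖f‖ ^ 2 = Real.circleAverage (fun z => ‖F z‖ ^ 2) 0 1 := by
  have hasSum_coeff : HasSum (fun n : ℕ => ‖f n‖ ^ 2) (‖f‖ ^ 2) := by
    simpa using lp.hasSum_norm (p := 2) (by norm_num) f
  have hasSum_fourier : HasSum
      (fun n : ℤ => ‖Real.circleAverage (fun z => z ^ (-n) * F z) 0 1‖ ^ 2) (‖f‖ ^ 2 + 0) := by
    apply HasSum.of_nat_of_neg_add_one
    · simpa only [h.circleAverage_zpow_neg_natCast_mul] using hasSum_coeff
    · simp only [neg_neg, h.circleAverage_zpow_succ_mul, norm_zero, ne_eq, two_ne_zero,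
        not_false_eq_true, zero_pow, hasSum_zero]
  rw [← add_zero (‖f‖ ^ 2)]
  exact hasSum_fourier.unique
    (hasSum_sq_norm_circleAverage_zpow_mul (h.continuousOn.mono sphere_subset_closedBall))

end HasContinuousExtension

theorem hasContinuousExtension_sum_single (f : H2) (S : Finset ℕ) :
    (∑ n ∈ S, lp.single 2 n (f n) : H2).HasContinuousExtension
      fun z => ∑ n ∈ S, f n * z ^ n where
  continuousOn := by fun_prop
  eqOn z _ := by
    have coeff_eq (k : ℕ) : (∑ n ∈ S, lp.single 2 n (f n) : H2) k = if k ∈ S then f k else 0 := by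
      rw [lp.coeFn_sum, Finset.sum_apply]
      simp [lp.single_apply, Pi.single_apply]
    simp only [toFun, coeff_eq, ite_mul, zero_mul]
    rw [tsum_eq_sum fun k hk => if_neg hk]
    exact Finset.sum_congr rfl fun k hk => if_pos hk

theorem dense_setOf_exists_hasContinuousExtension :
    Dense {f : H2 | ∃ F, f.HasContinuousExtension F} := fun f =>
  mem_closure_of_tendsto (lp.hasSum_single ENNReal.ofNat_ne_top f)
    (.of_forall fun S => ⟨_, hasContinuousExtension_sum_single f S⟩)

end H2

/-- The disc automorphism `z ↦ (z + a) / (1 + a̅ z)`. For `0 < ‖a‖ < 1` it is hyperbolic with fixed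
points `a / ‖a‖` (attracting) and `-a / ‖a‖` (repelling). -/
noncomputable def discAut (a z : ℂ) : ℂ := (z + a) / (1 + conj a * z)

/-- A lift of `discAut a` on the unit circle to the angular coordinate: on the circle,
`discAut a z = z * w̅ / w` with `w = 1 + a̅ z`, and `w` stays in the right half plane. -/
noncomputable def discAutLift (a : ℂ) (θ : ℝ) : ℝ :=
  θ - 2 * Complex.arg (1 + conj a * circleMap 0 1 θ)

section DiscAut

variable {a z : ℂ}

theorem re_one_add_conj_mul_pos (ha : ‖a‖ < 1) (hz : ‖z‖ ≤ 1) : 0 < (1 + conj a * z).re := by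
  have norm_lt : ‖conj a * z‖ < 1 := by
    rw [norm_mul, Complex.norm_conj]
    exact mul_lt_one_of_nonneg_of_lt_one_left (norm_nonneg a) ha hz
  have := neg_le_of_abs_le (Complex.abs_re_le_norm (conj a * z))
  rw [Complex.add_re, Complex.one_re]
  linarith

theorem one_add_conj_mul_ne_zero (ha : ‖a‖ < 1) (hz : ‖z‖ ≤ 1) : 1 + conj a * z ≠ 0 := fun h =>
  (re_one_add_conj_mul_pos ha hz).ne' (by rw [h, Complex.zero_re])

theorem norm_sq_one_add_conj_mul_sub_norm_sq_add (a z : ℂ) :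
    ‖1 + conj a * z‖ ^ 2 - ‖z + a‖ ^ 2 = (1 - ‖a‖ ^ 2) * (1 - ‖z‖ ^ 2) := by
  simp only [Complex.sq_norm, Complex.normSq_apply, Complex.add_re, Complex.add_im,
    Complex.mul_re, Complex.mul_im, Complex.conj_re, Complex.conj_im, Complex.one_re,
    Complex.one_im]
  ring

theorem norm_one_add_conj_mul_of_norm_eq_one (hz : ‖z‖ = 1) : ‖1 + conj a * z‖ = ‖z + a‖ := by
  have h := norm_sq_one_add_conj_mul_sub_norm_sq_add a z
  rw [hz, one_pow, sub_self, mul_zero, sub_eq_zero] at h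
  exact (pow_left_inj₀ (norm_nonneg _) (norm_nonneg _) two_ne_zero).1 h

theorem norm_discAut_le_one (ha : ‖a‖ < 1) (hz : ‖z‖ ≤ 1) : ‖discAut a z‖ ≤ 1 := by
  rw [discAut, norm_div]
  refine div_le_one_of_le₀ (le_of_sq_le_sq ?_ (norm_nonneg _)) (norm_nonneg _)
  rw [← sub_nonneg, norm_sq_one_add_conj_mul_sub_norm_sq_add]
  exact mul_nonneg (sub_nonneg.2 (pow_le_one₀ (norm_nonneg a) ha.le))
    (sub_nonneg.2 (pow_le_one₀ (norm_nonneg z) hz))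

theorem norm_discAut_lt_one (ha : ‖a‖ < 1) (hz : ‖z‖ < 1) : ‖discAut a z‖ < 1 := by
  rw [discAut, norm_div, div_lt_one (norm_pos_iff.2 (one_add_conj_mul_ne_zero ha hz.le))]
  refine lt_of_pow_lt_pow_left₀ 2 (norm_nonneg _) ?_
  rw [← sub_pos, norm_sq_one_add_conj_mul_sub_norm_sq_add]
  exact mul_pos (sub_pos.2 (pow_lt_one₀ (norm_nonneg a) ha two_ne_zero))
    (sub_pos.2 (pow_lt_one₀ (norm_nonneg z) hz two_ne_zero))

theorem norm_discAut_of_norm_eq_one (ha : ‖a‖ < 1) (hz : ‖z‖ = 1) : ‖discAut a z‖ = 1 := by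
  rw [discAut, norm_div, ← norm_one_add_conj_mul_of_norm_eq_one hz,
    div_self (norm_ne_zero_iff.2 (one_add_conj_mul_ne_zero ha hz.le))]

theorem mapsTo_discAut_closedBall (ha : ‖a‖ < 1) :
    Set.MapsTo (discAut a) (closedBall 0 1) (closedBall 0 1) := fun z hz => by
  rw [mem_closedBall_zero_iff] at hz ⊢
  exact norm_discAut_le_one ha hz

theorem mapsTo_discAut_ball (ha : ‖a‖ < 1) :
    Set.MapsTo (discAut a) (ball 0 1) (ball 0 1) := fun z hz => by
  rw [mem_ball_zero_iff] at hz ⊢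
  exact norm_discAut_lt_one ha hz

theorem mapsTo_discAut_sphere (ha : ‖a‖ < 1) :
    Set.MapsTo (discAut a) (sphere 0 1) (sphere 0 1) := fun z hz => by
  rw [mem_sphere_zero_iff_norm] at hz ⊢
  exact norm_discAut_of_norm_eq_one ha hz

theorem continuousOn_discAut (ha : ‖a‖ < 1) : ContinuousOn (discAut a) (closedBall 0 1) :=
  ContinuousOn.div (by fun_prop) (by fun_prop) fun _ hz =>
    one_add_conj_mul_ne_zero ha (mem_closedBall_zero_iff.1 hz)

theorem poissonKernel_neg_of_norm_eq_one (hz : ‖z‖ = 1) :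
    poissonKernel 0 (-a) z = (1 - ‖a‖ ^ 2) / ‖1 + conj a * z‖ ^ 2 := by
  simp [poissonKernel_def, norm_one_add_conj_mul_of_norm_eq_one hz, hz]

theorem poissonKernel_neg_pos_of_norm_eq_one (ha : ‖a‖ < 1) (hz : ‖z‖ = 1) :
    0 < poissonKernel 0 (-a) z := by
  rw [poissonKernel_neg_of_norm_eq_one hz]
  have := norm_pos_iff.2 (one_add_conj_mul_ne_zero ha hz.le)
  exact div_pos (sub_pos.2 (pow_lt_one₀ (norm_nonneg a) ha two_ne_zero)) (by positivity)

theorem continuousOn_poissonKernel_neg (ha : ‖a‖ < 1) :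
    ContinuousOn (poissonKernel 0 (-a)) (sphere 0 1) := by
  refine ContinuousOn.congr (f := fun z => (1 - ‖a‖ ^ 2) / ‖1 + conj a * z‖ ^ 2) ?_ fun z hz =>
    poissonKernel_neg_of_norm_eq_one (mem_sphere_zero_iff_norm.1 hz)
  refine ContinuousOn.div (by fun_prop) (by fun_prop) fun z hz => ?_
  exact pow_ne_zero 2 (norm_ne_zero_iff.2
    (one_add_conj_mul_ne_zero ha (mem_sphere_zero_iff_norm.1 hz).le))

theorem poissonKernel_neg_of_conj_mul_eq_ofReal (hz : ‖z‖ = 1) {r : ℝ} (hr : r ≠ -1)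
    (h : conj a * z = r) : poissonKernel 0 (-a) z = (1 - r) / (1 + r) := by
  have norm_sq_eq : ‖a‖ ^ 2 = r ^ 2 := by
    rw [← sq_abs r, ← Real.norm_eq_abs, ← Complex.norm_real, ← h, norm_mul, Complex.norm_conj, hz,
      mul_one]
  have : 1 + r ≠ 0 := fun h => hr (by linarith)
  rw [poissonKernel_neg_of_norm_eq_one hz, norm_sq_eq, h, ← Complex.ofReal_one,
    ← Complex.ofReal_add, Complex.norm_real, Real.norm_eq_abs, sq_abs]
  field

theorem conj_mul_div_norm (a : ℂ) : conj a * (a / ‖a‖) = ‖a‖ := by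
  rw [← mul_div_assoc, Complex.conj_mul', sq, mul_self_div_self]

theorem norm_div_norm_eq_one (ha₀ : a ≠ 0) : ‖a / ‖a‖‖ = 1 := by
  rw [norm_div, Complex.norm_real, norm_norm, div_self (norm_ne_zero_iff.2 ha₀)]

theorem poissonKernel_neg_div_norm (ha₀ : a ≠ 0) :
    poissonKernel 0 (-a) (a / ‖a‖) = (1 - ‖a‖) / (1 + ‖a‖) :=
  poissonKernel_neg_of_conj_mul_eq_ofReal (norm_div_norm_eq_one ha₀)
    (by linarith [norm_nonneg a]) (conj_mul_div_norm a)

theorem poissonKernel_neg_neg_div_norm (ha₀ : a ≠ 0) (ha : ‖a‖ < 1) :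
    poissonKernel 0 (-a) (-(a / ‖a‖)) = (1 + ‖a‖) / (1 - ‖a‖) := by
  rw [poissonKernel_neg_of_conj_mul_eq_ofReal (r := -‖a‖)
    ((norm_neg _).trans (norm_div_norm_eq_one ha₀)) (by linarith)
    (by rw [mul_neg, conj_mul_div_norm, Complex.ofReal_neg]), sub_neg_eq_add, ← sub_eq_add_neg]

theorem eq_or_eq_neg_of_im_conj_mul_eq_zero (ha₀ : a ≠ 0) (hz : ‖z‖ = 1)
    (h : (conj a * z).im = 0) : z = a / ‖a‖ ∨ z = -(a / ‖a‖) := by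
  have conj_ne_zero : conj a ≠ 0 := (map_ne_zero _).2 ha₀
  have eq_re : conj a * z = (conj a * z).re := Complex.ext rfl (by rw [h, Complex.ofReal_im])
  have abs_re : |(conj a * z).re| = ‖a‖ := by
    rw [← Real.norm_eq_abs, ← Complex.norm_real, ← eq_re, norm_mul, Complex.norm_conj, hz, mul_one]
  rcases eq_or_eq_neg_of_abs_eq abs_re with hre | hre <;> rw [hre] at eq_re
  · exact .inl (mul_left_cancel₀ conj_ne_zero (eq_re.trans (conj_mul_div_norm a).symm))
  · refine .inr (mul_left_cancel₀ conj_ne_zero ?_)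
    rw [eq_re, mul_neg, conj_mul_div_norm, Complex.ofReal_neg]

theorem re_conj_mul_discAut (ha : ‖a‖ < 1) (hz : ‖z‖ = 1) :
    (conj a * discAut a z).re =
      (conj a * z).re + 2 * (conj a * z).im ^ 2 / ‖1 + conj a * z‖ ^ 2 := by
  have ne_zero := one_add_conj_mul_ne_zero ha hz.le
  have normSq_ne_zero := (Complex.normSq_pos.2 ne_zero).ne'
  have eq_div : conj a * discAut a z = (Complex.normSq (conj a * z) + conj a * z) /
      (1 + conj a * z) := by
    rw [discAut, ← mul_div_assoc, Complex.normSq_mul, Complex.normSq_eq_norm_sq z, hz,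
      Complex.normSq_conj, one_pow, mul_one, Complex.normSq_eq_conj_mul_self]
    ring
  rw [eq_div, Complex.div_re, ← Complex.normSq_eq_norm_sq]
  generalize conj a * z = t at *
  field_simp
  simp only [Complex.normSq_apply, Complex.add_re, Complex.add_im, Complex.one_re, Complex.one_im,
    Complex.ofReal_re, Complex.ofReal_im]
  ring

theorem hasDerivAt_arg_comp {f : ℝ → ℂ} {f' : ℂ} {x : ℝ} (hf : HasDerivAt f f' x)
    (hx : f x ∈ Complex.slitPlane) : HasDerivAt (fun t => (f t).arg) (f' / f x).im x := by
  simpa only [Function.comp_def, Complex.imCLM_apply, Complex.log_im] using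
    Complex.imCLM.hasFDerivAt.comp_hasDerivAt x (hf.clog_real hx)

theorem hasDerivAt_discAutLift (ha : ‖a‖ < 1) (θ : ℝ) :
    HasDerivAt (discAutLift a) (poissonKernel 0 (-a) (circleMap 0 1 θ)) θ := by
  have norm_eq_one : ‖circleMap 0 1 θ‖ = 1 := by simp
  have hasDerivAt_arg := hasDerivAt_arg_comp
    (((hasDerivAt_circleMap 0 1 θ).const_mul (conj a)).const_add 1)
    (.inl (re_one_add_conj_mul_pos ha norm_eq_one.le))
  refine ((hasDerivAt_id θ).sub (hasDerivAt_arg.const_mul 2)).congr_deriv ?_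
  set t : ℂ := conj a * circleMap 0 1 θ with ht
  have normSq_ne_zero : Complex.normSq (1 + t) ≠ 0 :=
    (Complex.normSq_pos.2 (one_add_conj_mul_ne_zero ha norm_eq_one.le)).ne'
  have norm_sq_eq : ‖a‖ ^ 2 = Complex.normSq t := by
    rw [Complex.normSq_eq_norm_sq, ht, norm_mul, Complex.norm_conj, norm_eq_one, mul_one]
  rw [poissonKernel_neg_of_norm_eq_one norm_eq_one, ← ht, norm_sq_eq,
    ← Complex.normSq_eq_norm_sq, ← mul_assoc, ← ht, Complex.div_im]
  field_simp
  simp only [Complex.normSq_apply, Complex.add_re, Complex.add_im, Complex.one_re, Complex.one_im,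
    Complex.mul_re, Complex.mul_im, Complex.I_re, Complex.I_im]
  ring

theorem discAutLift_two_pi (a : ℂ) :
    discAutLift a (2 * Real.pi) = discAutLift a 0 + 2 * Real.pi := by
  simp only [discAutLift, circleMap, Complex.ofReal_mul, Complex.ofReal_ofNat,
    Complex.exp_two_pi_mul_I, Complex.ofReal_zero, zero_mul, Complex.exp_zero]
  ring

theorem conj_div_self_eq_exp_arg {w : ℂ} (hw : w ≠ 0) :
    conj w / w = Complex.exp (-(2 * w.arg) * Complex.I) := by
  conv_lhs => rw [← Complex.exp_log hw, ← Complex.exp_conj, ← Complex.exp_sub]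
  rw [← neg_sub, Complex.sub_conj, Complex.log_im, Complex.ofReal_mul, Complex.ofReal_ofNat,
    neg_mul]

theorem circleMap_discAutLift (ha : ‖a‖ < 1) (θ : ℝ) :
    circleMap 0 1 (discAutLift a θ) = discAut a (circleMap 0 1 θ) := by
  set z := circleMap 0 1 θ with hz
  have norm_eq_one : ‖z‖ = 1 := by simp [hz]
  have mul_conj_eq : z * conj (1 + conj a * z) = z + a := by
    have : z * conj z = 1 := by simp [Complex.mul_conj', norm_eq_one]
    simp only [map_add, map_one, map_mul, Complex.conj_conj]
    linear_combination a * this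
  rw [discAut, ← mul_conj_eq, mul_div_assoc,
    conj_div_self_eq_exp_arg (one_add_conj_mul_ne_zero ha norm_eq_one.le)]
  simp only [hz, circleMap, discAutLift, zero_add, Complex.ofReal_one, one_mul, ← Complex.exp_add]
  congr 1
  push_cast
  ring

theorem circleAverage_comp_discAut_mul_poissonKernel (ha : ‖a‖ < 1) {G : ℂ → ℝ}
    (hG : ContinuousOn G (sphere 0 1)) :
    Real.circleAverage (fun z => G (discAut a z) * poissonKernel 0 (-a) z) 0 1 =
      Real.circleAverage G 0 1 := by
  have hcircle := circleMap_mem_sphere (0 : ℂ) zero_le_one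
  have change_of_variables := intervalIntegral.integral_comp_mul_deriv
    (a := 0) (b := 2 * Real.pi) (fun θ _ => hasDerivAt_discAutLift ha θ)
    ((continuousOn_poissonKernel_neg ha).comp_continuous (continuous_circleMap 0 1)
      hcircle).continuousOn
    (hG.comp_continuous (continuous_circleMap 0 1) hcircle)
  have periodic : Function.Periodic (fun θ => G (circleMap 0 1 θ)) (2 * Real.pi) := fun θ => by
    simp only [periodic_circleMap 0 1 θ]
  simp only [Function.comp_apply, circleMap_discAutLift ha, discAutLift_two_pi]
    at change_of_variables
  rw [Real.circleAverage_def, Real.circleAverage_def, change_of_variables,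
    periodic.intervalIntegral_add_eq _ 0, zero_add]

end DiscAut

section Weight

variable {a : ℂ} {ψ : ℂ → ℂ} {q : ℝ}

theorem norm_sq_div_poissonKernel_lt_of_im_conj_mul_eq_zero {z : ℂ} (ha₀ : a ≠ 0) (ha : ‖a‖ < 1)
    (hψ_attr : ‖ψ (a / ‖a‖)‖ * √((1 + ‖a‖) / (1 - ‖a‖)) < q)
    (hψ_rep : ‖ψ (-(a / ‖a‖))‖ * √((1 - ‖a‖) / (1 + ‖a‖)) < q)
    (hz : ‖z‖ = 1) (him : (conj a * z).im = 0) :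
    ‖ψ z‖ ^ 2 / poissonKernel 0 (-a) z < q ^ 2 := by
  have sq_lt {y : ℝ} (hy : 0 ≤ y) (h : ‖ψ z‖ * √y < q) : ‖ψ z‖ ^ 2 * y < q ^ 2 := by
    rw [← Real.sq_sqrt hy, ← mul_pow]
    exact pow_lt_pow_left₀ h (by positivity) two_ne_zero
  have one_sub_nonneg : 0 ≤ 1 - ‖a‖ := by linarith
  rcases eq_or_eq_neg_of_im_conj_mul_eq_zero ha₀ hz him with rfl | rfl
  · rw [poissonKernel_neg_div_norm ha₀, div_eq_mul_inv, inv_div]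
    exact sq_lt (div_nonneg (by positivity) one_sub_nonneg) hψ_attr
  · rw [poissonKernel_neg_neg_div_norm ha₀ ha, div_eq_mul_inv, inv_div]
    exact sq_lt (div_nonneg one_sub_nonneg (by positivity)) hψ_rep

theorem exists_forall_norm_sq_mul_exp_le (ha₀ : a ≠ 0) (ha : ‖a‖ < 1)
    (hψ : ContinuousOn ψ (sphere 0 1))
    (hψ_attr : ‖ψ (a / ‖a‖)‖ * √((1 + ‖a‖) / (1 - ‖a‖)) < q)
    (hψ_rep : ‖ψ (-(a / ‖a‖))‖ * √((1 - ‖a‖) / (1 + ‖a‖)) < q) :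
    ∃ A : ℝ, ∀ z ∈ sphere (0 : ℂ) 1, ‖ψ z‖ ^ 2 * Real.exp (A * (conj a * z).re) ≤
      q ^ 2 * (Real.exp (A * (conj a * discAut a z).re) * poissonKernel 0 (-a) z) := by
  have hq : 0 < q := lt_of_le_of_lt (by positivity) hψ_attr
  have norm_eq_one {z : ℂ} : z ∈ sphere (0 : ℂ) 1 → ‖z‖ = 1 := mem_sphere_zero_iff_norm.1
  have poisson_pos {z : ℂ} (hz : z ∈ sphere (0 : ℂ) 1) :=
    poissonKernel_neg_pos_of_norm_eq_one ha (norm_eq_one hz)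
  have den_pos {z : ℂ} (hz : z ∈ sphere (0 : ℂ) 1) : 0 < ‖1 + conj a * z‖ ^ 2 :=
    pow_pos (norm_pos_iff.2 (one_add_conj_mul_ne_zero ha (norm_eq_one hz).le)) 2
  obtain ⟨A, hA⟩ := exists_forall_le_mul_exp_of_isCompact (isCompact_sphere (0 : ℂ) 1)
    (H := fun z => ‖ψ z‖ ^ 2 / poissonKernel 0 (-a) z)
    (d := fun z => 2 * (conj a * z).im ^ 2 / ‖1 + conj a * z‖ ^ 2)
    ((hψ.norm.pow 2).div (continuousOn_poissonKernel_neg ha) fun z hz => (poisson_pos hz).ne')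
    (ContinuousOn.div (by fun_prop) (by fun_prop) fun z hz => (den_pos hz).ne')
    (fun z _ => by positivity) (pow_pos hq 2) fun z hz hdrift =>
      norm_sq_div_poissonKernel_lt_of_im_conj_mul_eq_zero ha₀ ha hψ_attr hψ_rep (norm_eq_one hz)
        (by simpa [(den_pos hz).ne'] using hdrift)
  refine ⟨A, fun z hz => ?_⟩
  rw [re_conj_mul_discAut ha (norm_eq_one hz), mul_add, Real.exp_add]
  calc ‖ψ z‖ ^ 2 * Real.exp (A * (conj a * z).re)
      ≤ q ^ 2 * Real.exp (A * (2 * (conj a * z).im ^ 2 / ‖1 + conj a * z‖ ^ 2)) *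
          poissonKernel 0 (-a) z * Real.exp (A * (conj a * z).re) := by
        gcongr
        exact (div_le_iff₀ (poisson_pos hz)).1 (hA z hz)
    _ = _ := by ring

end Weight

/-- The weighted composition `F ↦ ψ · (F ∘ φ)` on functions, inducing the operator `C_{ψ,φ}`. -/
def weightedComp (ψ φ F : ℂ → ℂ) : ℂ → ℂ := fun z => ψ z * F (φ z)

/-- The squared norm of `L²(w dθ/2π)` on the unit circle. -/
noncomputable def weightedNormSq (w : ℂ → ℝ) (F : ℂ → ℂ) : ℝ :=
  Real.circleAverage (fun z => ‖F z‖ ^ 2 * w z) 0 1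

section WeightedNormSq

variable {w v : ℂ → ℝ} {F : ℂ → ℂ}

theorem circleIntegrable_norm_sq_mul (hF : ContinuousOn F (sphere 0 1))
    (hw : ContinuousOn w (sphere 0 1)) : CircleIntegrable (fun z => ‖F z‖ ^ 2 * w z) 0 1 :=
  ((hF.norm.pow 2).mul hw).circleIntegrable zero_le_one

theorem weightedNormSq_le_mul (hF : ContinuousOn F (sphere 0 1)) (hw : ContinuousOn w (sphere 0 1))
    (hv : ContinuousOn v (sphere 0 1)) {C : ℝ} (h : ∀ z ∈ sphere (0 : ℂ) 1, w z ≤ C * v z) :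
    weightedNormSq w F ≤ C * weightedNormSq v F := by
  rw [weightedNormSq, weightedNormSq, ← smul_eq_mul, ← Real.circleAverage_fun_smul]
  refine Real.circleAverage_mono (circleIntegrable_norm_sq_mul hF hw)
    (circleIntegrable_norm_sq_mul hF hv).const_smul fun z hz => ?_
  rw [abs_one] at hz
  rw [smul_eq_mul, mul_left_comm]
  gcongr
  exact h z hz

theorem H2.HasContinuousExtension.norm_sq_eq_weightedNormSq_one {f : H2}
    (h : f.HasContinuousExtension F) : ‖f‖ ^ 2 = weightedNormSq 1 F := by
  simpa only [weightedNormSq, Pi.one_apply, mul_one] using h.norm_sq_eq_circleAverage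

end WeightedNormSq

section WeightedComp

variable {a : ℂ} {ψ F : ℂ → ℂ} {w : ℂ → ℝ} {q : ℝ}

theorem continuousOn_weightedComp {φ : ℂ → ℂ} {K : Set ℂ} (hψ : ContinuousOn ψ K)
    (hφ : ContinuousOn φ K) (hφK : Set.MapsTo φ K K) (hF : ContinuousOn F K) :
    ContinuousOn (weightedComp ψ φ F) K :=
  hψ.mul (hF.comp hφ hφK)

theorem weightedNormSq_weightedComp_le (ha : ‖a‖ < 1) (hψ : ContinuousOn ψ (sphere 0 1))
    (hw : ContinuousOn w (sphere 0 1))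
    (hψw : ∀ z ∈ sphere (0 : ℂ) 1,
      ‖ψ z‖ ^ 2 * w z ≤ q ^ 2 * (w (discAut a z) * poissonKernel 0 (-a) z))
    (hF : ContinuousOn F (sphere 0 1)) :
    weightedNormSq w (weightedComp ψ (discAut a) F) ≤ q ^ 2 * weightedNormSq w F := by
  have hφ := (continuousOn_discAut ha).mono sphere_subset_closedBall
  have hφ_sphere := mapsTo_discAut_sphere ha
  have hFw : ContinuousOn (fun z => ‖F z‖ ^ 2 * w z) (sphere 0 1) := (hF.norm.pow 2).mul hw
  rw [weightedNormSq, weightedNormSq, ← circleAverage_comp_discAut_mul_poissonKernel ha hFw,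
    ← smul_eq_mul, ← Real.circleAverage_fun_smul]
  refine Real.circleAverage_mono
    (circleIntegrable_norm_sq_mul (continuousOn_weightedComp hψ hφ hφ_sphere hF) hw)
    (((hFw.comp hφ hφ_sphere).mul
      (continuousOn_poissonKernel_neg ha)).circleIntegrable zero_le_one).const_smul fun z hz => ?_
  rw [abs_one] at hz
  calc ‖ψ z * F (discAut a z)‖ ^ 2 * w z
      = ‖F (discAut a z)‖ ^ 2 * (‖ψ z‖ ^ 2 * w z) := by rw [norm_mul]; ring
    _ ≤ ‖F (discAut a z)‖ ^ 2 * (q ^ 2 * (w (discAut a z) * poissonKernel 0 (-a) z)) :=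
        mul_le_mul_of_nonneg_left (hψw z hz) (sq_nonneg _)
    _ = q ^ 2 • (‖F (discAut a z)‖ ^ 2 * w (discAut a z) * poissonKernel 0 (-a) z) := by
        rw [smul_eq_mul]; ring

variable {T : H2 →L[ℂ] H2} {f : H2}

theorem H2.HasContinuousExtension.weightedComp {φ : ℂ → ℂ} (hf : f.HasContinuousExtension F)
    (hψ : ContinuousOn ψ (closedBall 0 1)) (hφ : ContinuousOn φ (closedBall 0 1))
    (hφ_closedBall : Set.MapsTo φ (closedBall 0 1) (closedBall 0 1))
    (hφ_ball : Set.MapsTo φ (ball 0 1) (ball 0 1))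
    (hT : ∀ f : H2, ∀ z ∈ ball (0 : ℂ) 1, (T f).toFun z = ψ z * f.toFun (φ z)) :
    (T f).HasContinuousExtension (weightedComp ψ φ F) where
  continuousOn := continuousOn_weightedComp hψ hφ hφ_closedBall hf.continuousOn
  eqOn z hz := (hT f z hz).trans (congrArg (ψ z * ·) (hf.eqOn (hφ_ball hz)))

theorem exists_hasContinuousExtension_pow_weightedNormSq_le (ha : ‖a‖ < 1)
    (hψ : ContinuousOn ψ (closedBall 0 1))
    (hT : ∀ f : H2, ∀ z ∈ ball (0 : ℂ) 1, (T f).toFun z = ψ z * f.toFun (discAut a z))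
    (hw : ContinuousOn w (sphere 0 1))
    (hψw : ∀ z ∈ sphere (0 : ℂ) 1,
      ‖ψ z‖ ^ 2 * w z ≤ q ^ 2 * (w (discAut a z) * poissonKernel 0 (-a) z))
    (hf : f.HasContinuousExtension F) (n : ℕ) :
    ∃ G, ((T ^ n) f).HasContinuousExtension G ∧
      weightedNormSq w G ≤ (q ^ n) ^ 2 * weightedNormSq w F := by
  induction n with
  | zero => exact ⟨F, hf, by simp⟩
  | succ n ih =>
    obtain ⟨G, hG, hGF⟩ := ih
    refine ⟨weightedComp ψ (discAut a) G, ?_, ?_⟩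
    · rw [pow_succ']
      exact hG.weightedComp hψ (continuousOn_discAut ha) (mapsTo_discAut_closedBall ha)
        (mapsTo_discAut_ball ha) hT
    · calc weightedNormSq w (weightedComp ψ (discAut a) G)
          ≤ q ^ 2 * weightedNormSq w G :=
            weightedNormSq_weightedComp_le ha (hψ.mono sphere_subset_closedBall) hw hψw
              (hG.continuousOn.mono sphere_subset_closedBall)
        _ ≤ q ^ 2 * ((q ^ n) ^ 2 * weightedNormSq w F) := by gcongr
        _ = (q ^ (n + 1)) ^ 2 * weightedNormSq w F := by ring

theorem exists_forall_norm_pow_le (ha : ‖a‖ < 1) (hψ : ContinuousOn ψ (closedBall 0 1))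
    (hT : ∀ f : H2, ∀ z ∈ ball (0 : ℂ) 1, (T f).toFun z = ψ z * f.toFun (discAut a z))
    (hw : ContinuousOn w (sphere 0 1)) (hw_pos : ∀ z ∈ sphere (0 : ℂ) 1, 0 < w z) (hq : 0 ≤ q)
    (hψw : ∀ z ∈ sphere (0 : ℂ) 1,
      ‖ψ z‖ ^ 2 * w z ≤ q ^ 2 * (w (discAut a z) * poissonKernel 0 (-a) z)) :
    ∃ C : ℝ, ∀ n : ℕ, ‖T ^ n‖ ≤ C * q ^ n := by
  obtain ⟨C, hC, hwC⟩ :=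
    exists_forall_le_and_one_le_mul_of_isCompact (isCompact_sphere (0 : ℂ) 1) hw hw_pos
  refine ⟨C, fun n => ContinuousLinearMap.opNorm_le_bound _ (by positivity) fun f => ?_⟩
  refine H2.dense_setOf_exists_hasContinuousExtension.induction
    (P := fun f => ‖(T ^ n) f‖ ≤ C * q ^ n * ‖f‖) ?_ (isClosed_le (by fun_prop) (by fun_prop)) f
  rintro f ⟨F, hF⟩
  obtain ⟨G, hG, hGF⟩ :=
    exists_hasContinuousExtension_pow_weightedNormSq_le ha hψ hT hw hψw hF n
  refine le_of_sq_le_sq ?_ (by positivity)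
  calc ‖(T ^ n) f‖ ^ 2 = weightedNormSq 1 G := hG.norm_sq_eq_weightedNormSq_one
    _ ≤ C * weightedNormSq w G :=
        weightedNormSq_le_mul (hG.continuousOn.mono sphere_subset_closedBall)
          continuous_one.continuousOn hw fun z hz => (hwC z hz).2
    _ ≤ C * ((q ^ n) ^ 2 * (C * weightedNormSq 1 F)) := by
        gcongr
        refine hGF.trans ?_
        gcongr
        exact weightedNormSq_le_mul (hF.continuousOn.mono sphere_subset_closedBall) hw
          continuous_one.continuousOn fun z hz => by simpa using (hwC z hz).1
    _ = (C * q ^ n * ‖f‖) ^ 2 := by rw [mul_pow _ ‖f‖, hF.norm_sq_eq_weightedNormSq_one]; ring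

theorem spectralRadius_le_of_norm_mul_sqrt_lt (ha₀ : a ≠ 0) (ha : ‖a‖ < 1)
    (hψ : ContinuousOn ψ (closedBall 0 1))
    (hT : ∀ f : H2, ∀ z ∈ ball (0 : ℂ) 1, (T f).toFun z = ψ z * f.toFun (discAut a z))
    (hψ_attr : ‖ψ (a / ‖a‖)‖ * √((1 + ‖a‖) / (1 - ‖a‖)) < q)
    (hψ_rep : ‖ψ (-(a / ‖a‖))‖ * √((1 - ‖a‖) / (1 + ‖a‖)) < q) :
    spectralRadius ℂ T ≤ ENNReal.ofReal q := by
  have hq : 0 ≤ q := le_trans (by positivity) hψ_attr.le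
  obtain ⟨A, hA⟩ := exists_forall_norm_sq_mul_exp_le ha₀ ha (hψ.mono sphere_subset_closedBall)
    hψ_attr hψ_rep
  obtain ⟨C, hC⟩ := exists_forall_norm_pow_le (w := fun z => Real.exp (A * (conj a * z).re))
    ha hψ hT (by fun_prop) (fun z _ => Real.exp_pos _) hq hA
  exact spectralRadius_le_of_forall_norm_pow_le hq hC

end WeightedComp

theorem stmt19_general {a : ℂ} (ha₀ : a ≠ 0) (ha : ‖a‖ < 1) {ψ : ℂ → ℂ}
    (hψ : ContinuousOn ψ (closedBall 0 1)) {T : H2 →L[ℂ] H2}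
    (hT : ∀ f : H2, ∀ z ∈ ball (0 : ℂ) 1, (T f).toFun z = ψ z * f.toFun (discAut a z)) :
    spectralRadius ℂ T ≤
      ENNReal.ofReal
        (max (‖ψ (a / ‖a‖)‖ * √((1 + ‖a‖) / (1 - ‖a‖)))
             (‖ψ (-(a / ‖a‖))‖ * √((1 - ‖a‖) / (1 + ‖a‖)))) := by
  generalize hM : max (_ : ℝ) _ = M
  refine ge_of_tendsto (ENNReal.continuous_ofReal.continuousWithinAt (s := Set.Ioi M)) ?_
  filter_upwards [self_mem_nhdsWithin] with q hq
  obtain ⟨hψ_attr, hψ_rep⟩ := max_lt_iff.1 (hM.trans_lt hq)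
  exact spectralRadius_le_of_norm_mul_sqrt_lt ha₀ ha hψ hT hψ_attr hψ_rep

/-- Let `φ(z) = (z+s)/(1+sz)` with `s ∈ (0,1)` and let `ψ` be holomorphic on `𝔻`, continuous
on the closed disc and bounded away from zero. Then the spectral radius of the weighted
composition operator `C_{ψ,φ}` on `H²(𝔻)` satisfies
`r(C_{ψ,φ}) ≤ max { |ψ(1)|((1+s)/(1-s))^{1/2}, |ψ(-1)|((1-s)/(1+s))^{1/2} }`. -/
theorem stmt19 (s : ℝ) (hs : s ∈ Set.Ioo (0 : ℝ) 1)
    (φ : ℂ → ℂ) (hφ : ∀ z : ℂ, φ z = (z + s) / (1 + s * z))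
    (ψ : ℂ → ℂ)
    (hψc : ContinuousOn ψ (closedBall 0 1))
    (hψ : DifferentiableOn ℂ ψ (ball 0 1))
    (hψ0 : ∃ ε > (0 : ℝ), ∀ z ∈ ball (0 : ℂ) 1, ε ≤ ‖ψ z‖)
    (T : H2 →L[ℂ] H2)
    (hT : ∀ f : H2, ∀ z ∈ ball (0 : ℂ) 1, (T f).toFun z = ψ z * f.toFun (φ z)) :
    spectralRadius ℂ T ≤
      ENNReal.ofReal
        (max (‖ψ 1‖ * Real.sqrt ((1 + s) / (1 - s)))
             (‖ψ (-1)‖ * Real.sqrt ((1 - s) / (1 + s)))) := by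
  have s_ne_zero : (s : ℂ) ≠ 0 := Complex.ofReal_ne_zero.2 hs.1.ne'
  have norm_s : ‖(s : ℂ)‖ = s := (Complex.norm_real s).trans (Real.norm_of_nonneg hs.1.le)
  simpa only [norm_s, div_self s_ne_zero] using
    stmt19_general s_ne_zero (norm_s.trans_lt hs.2) hψc fun f z hz => by
      rw [hT f z hz, hφ, discAut, Complex.conj_ofReal]
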